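/- Let ħ > 0, let N ≥ 2 be an integer, and for γ = (γ₁,…,γ_{N−1}) ∈ ℂ^{N−1} define m(γ) = (πħ)^{−(N−1)(N−2)/2} · ∏_{1≤j<k≤N−1} (γ_j−γ_k)·sinh(π(γ_j−γ_k)/ħ). Then for every index j ∈ {1,…,N−1} and every γ ∈ ℂ^{N−1} with γ_j ≠ γ_m for all m ≠ j, one has m(γ + iħe_j) = (−1)^N · m(γ) · ∏_{m≠j} (γ_j−γ_m+iħ)/(γ_j−γ_m), where e_j is the j-th standard basis vector of ℂ^{N−1}. -/

import Mathlib

open Finset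

/-- The analytic continuation to `ℂ^{N-1}` of the inverse Sklyanin measure
`μ⁻¹(γ) = (πħ)^{-(N-1)(N-2)/2} ∏_{j<k} (γⱼ-γₖ) sinh(π(γⱼ-γₖ)/ħ)`. -/
noncomputable def sklyaninMeasureInv (hbar : ℝ) (N : ℕ) (γ : Fin (N - 1) → ℂ) : ℂ :=
  ((Real.pi * hbar : ℝ) : ℂ) ^ (-(((N - 1) * (N - 2) / 2 : ℕ) : ℤ)) *
    ∏ j : Fin (N - 1), ∏ k ∈ Finset.univ.filter (fun k => j < k),
      (γ j - γ k) * Complex.sinh ((Real.pi : ℂ) * (γ j - γ k) / (hbar : ℂ))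

/-- Equation (pl4): the difference equation for the inverse Sklyanin measure under
the shift `γ ↦ γ + iħ eⱼ`. -/
theorem sklyaninMeasureInv_shift (hbar : ℝ) (hhbar : 0 < hbar) (N : ℕ) (hN : 2 ≤ N)
    (j : Fin (N - 1)) (γ : Fin (N - 1) → ℂ)
    (hγ : ∀ m : Fin (N - 1), m ≠ j → γ j ≠ γ m) :
    sklyaninMeasureInv hbar N (Function.update γ j (γ j + Complex.I * (hbar : ℂ)))
      = (-1 : ℂ) ^ N * sklyaninMeasureInv hbar N γ *
        ∏ m ∈ Finset.univ.erase j,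
          (γ j - γ m + Complex.I * (hbar : ℂ)) / (γ j - γ m) := by
  have hh : (hbar : ℂ) ≠ 0 := by exact_mod_cast hhbar.ne'
  set C : Fin (N - 1) → ℂ := fun m =>
    (-1) * ((γ j - γ m + Complex.I * (hbar : ℂ)) / (γ j - γ m)) with hC
  have hs : ∀ x : ℂ, Complex.sinh ((Real.pi : ℂ) * (x + Complex.I * hbar) / hbar)
      = - Complex.sinh ((Real.pi : ℂ) * x / hbar) := by
    intro x
    have : (Real.pi : ℂ) * (x + Complex.I * hbar) / hbar
        = (Real.pi : ℂ) * x / hbar + Real.pi * Complex.I := by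
      field_simp
    rw [this, Complex.sinh_add, Complex.cosh_mul_I, Complex.sinh_mul_I]
    simp
  have hterm : ∀ a k : Fin (N - 1), a < k →
      (Function.update γ j (γ j + Complex.I * (hbar : ℂ)) a
        - Function.update γ j (γ j + Complex.I * (hbar : ℂ)) k) *
        Complex.sinh ((Real.pi : ℂ) * (Function.update γ j (γ j + Complex.I * (hbar : ℂ)) a
        - Function.update γ j (γ j + Complex.I * (hbar : ℂ)) k) / (hbar : ℂ))
      = ((γ a - γ k) * Complex.sinh ((Real.pi : ℂ) * (γ a - γ k) / (hbar : ℂ))) *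
        ((if a = j then C k else 1) * (if k = j then C a else 1)) := by
    intro a k hak
    by_cases ha : a = j
    · subst ha
      have hk : k ≠ a := hak.ne'
      have h0 : γ a - γ k ≠ 0 := sub_ne_zero.2 (hγ k hk)
      have e : γ a + Complex.I * (hbar : ℂ) - γ k = (γ a - γ k) + Complex.I * hbar := by ring
      simp only [Function.update_self, Function.update_of_ne hk, if_true, if_neg hk, hC, e, hs]
      field_simp
    · by_cases hk : k = j
      · subst hk
        have h0 : γ k - γ a ≠ 0 := sub_ne_zero.2 (hγ a ha)
        have e : γ a - (γ k + Complex.I * (hbar : ℂ))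
          = -((γ k - γ a) + Complex.I * hbar) := by ring
        have e2 : γ a - γ k = -(γ k - γ a) := by ring
        simp only [Function.update_self, Function.update_of_ne ha, if_true, if_neg ha, hC, e, e2,
          mul_neg, neg_div, Complex.sinh_neg, hs]
        field_simp
      · simp [Function.update_of_ne ha, Function.update_of_ne hk, ha, hk]
  have hcorr : ∏ a : Fin (N - 1), ∏ k ∈ Finset.univ.filter (fun k => a < k),
      ((if a = j then C k else 1) * (if k = j then C a else 1))
      = ∏ m ∈ Finset.univ.erase j, C m := by
    simp only [Finset.prod_mul_distrib]
    have h1 : ∏ a : Fin (N - 1), ∏ k ∈ Finset.univ.filter (fun k => a < k),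
        (if a = j then C k else 1) = ∏ k ∈ Finset.univ.filter (fun k => j < k), C k := by
      rw [Finset.prod_eq_single j]
      · simp
      · intro b _ hb
        simp [hb]
      · simp
    have h2 : ∏ a : Fin (N - 1), ∏ k ∈ Finset.univ.filter (fun k => a < k),
        (if k = j then C a else 1) = ∏ a ∈ Finset.univ.filter (fun a => ¬ j < a ∧ a ≠ j), C a := by
      rw [Finset.prod_filter]
      refine Finset.prod_congr rfl fun a _ => ?_
      rw [Finset.prod_ite_eq']
      have : (a < j) ↔ (¬ j < a ∧ a ≠ j) := by
        constructor
        · intro h; exact ⟨h.asymm, h.ne⟩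
        · rintro ⟨h, h'⟩; exact lt_of_le_of_ne (not_lt.1 h) h'
      simp only [Finset.mem_filter, Finset.mem_univ, true_and, this]
    rw [h1, h2, ← Finset.prod_filter_mul_prod_filter_not (Finset.univ.erase j) (fun k => j < k)]
    congr 1
    · refine Finset.prod_congr ?_ fun _ _ => rfl
      ext k
      simp only [Finset.mem_filter, Finset.mem_univ, true_and, Finset.mem_erase, and_true]
      exact ⟨fun h => ⟨h.ne', h⟩, fun h => h.2⟩
    · refine Finset.prod_congr ?_ fun _ _ => rfl
      ext k
      simp only [Finset.mem_filter, Finset.mem_univ, true_and, Finset.mem_erase, and_true]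
      exact and_comm
  have hCprod : ∏ m ∈ Finset.univ.erase j, C m = (-1 : ℂ) ^ N *
      ∏ m ∈ Finset.univ.erase j, (γ j - γ m + Complex.I * (hbar : ℂ)) / (γ j - γ m) := by
    simp only [hC]
    rw [Finset.prod_mul_distrib, Finset.prod_const, Finset.card_erase_of_mem (Finset.mem_univ j),
      Finset.card_univ, Fintype.card_fin]
    congr 1
    obtain ⟨n, rfl⟩ := Nat.exists_eq_add_of_le hN
    have : 2 + n - 1 - 1 = n := by omega
    rw [this, pow_add]
    simp
  unfold sklyaninMeasureInv
  rw [Finset.prod_congr rfl fun a _ => Finset.prod_congr rfl fun k hk =>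
    hterm a k (Finset.mem_filter.1 hk).2]
  simp only [Finset.prod_mul_distrib] at hcorr ⊢
  rw [hcorr, hCprod]
  ring
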